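/- Let A, A' be nondeterministic parity tree automata over T^d with alphabet 2^σ, and let m = |A| · |A'| + 1. Then A and A' are joint ≅^n_σ-consistent over T^d for every n ∈ ℕ if and only if A and A' are joint ≅^m_σ-consistent over T^d. -/

import Mathlib

/-- Formulae of the modal μ-calculus (in negation normal form). -/
inductive Form : Type
  | pos : ℕ → Form
  | neg : ℕ → Form
  | or  : Form → Form → Form
  | and : Form → Form → Form
  | dia : Form → Form
  | box : Form → Form
  | var : ℕ → Form
  | mu  : ℕ → Form → Form
  | nu  : ℕ → Form → Form

namespace Form

/-- Fixpoint-free formulae: modal logic ML. -/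
def IsML : Form → Prop
  | pos _ => True
  | neg _ => True
  | or φ ψ => IsML φ ∧ IsML ψ
  | and φ ψ => IsML φ ∧ IsML ψ
  | dia φ => IsML φ
  | box φ => IsML φ
  | var _ => False
  | mu _ _ => False
  | nu _ _ => False

/-- Modal depth: maximal nesting of ◇ and □. -/
def depth : Form → ℕ
  | pos _ => 0
  | neg _ => 0
  | or φ ψ => max φ.depth ψ.depth
  | and φ ψ => max φ.depth ψ.depth
  | dia φ => φ.depth + 1
  | box φ => φ.depth + 1
  | var _ => 0
  | mu _ φ => φ.depth
  | nu _ φ => φ.depth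

/-- The set of propositions occurring in a formula. -/
def sig : Form → Set ℕ
  | pos p => {p}
  | neg p => {p}
  | or φ ψ => φ.sig ∪ ψ.sig
  | and φ ψ => φ.sig ∪ ψ.sig
  | dia φ => φ.sig
  | box φ => φ.sig
  | var _ => ∅
  | mu _ φ => φ.sig
  | nu _ φ => φ.sig

/-- The size of a formula (its length as a string, up to a constant factor). -/
def size : Form → ℕ
  | pos _ => 1
  | neg _ => 2
  | or φ ψ => φ.size + ψ.size + 1
  | and φ ψ => φ.size + ψ.size + 1
  | dia φ => φ.size + 1
  | box φ => φ.size + 1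
  | var _ => 1
  | mu _ φ => φ.size + 2
  | nu _ φ => φ.size + 2

end Form

/-- A set has at least `g` elements. -/
def AtLeastCard {W : Type} (g : ℕ) (S : Set W) : Prop :=
  ∃ f : Fin g → W, Function.Injective f ∧ ∀ i, f i ∈ S

/-- Pointed Kripke structures. -/
structure Model : Type 1 where
  W : Type
  root : W
  R : W → W → Prop
  val : W → ℕ → Prop

namespace Model

/-- Semantics of the μ-calculus, via Knaster–Tarski style clauses. -/
def interp (M : Model) : Form → (ℕ → Set M.W) → Set M.W
  | .pos p, _ => {w | M.val w p}
  | .neg p, _ => {w | ¬ M.val w p}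
  | .or φ ψ, e => M.interp φ e ∪ M.interp ψ e
  | .and φ ψ, e => M.interp φ e ∩ M.interp ψ e
  | .dia φ, e => {w | ∃ v, M.R w v ∧ v ∈ M.interp φ e}
  | .box φ, e => {w | ∀ v, M.R w v → v ∈ M.interp φ e}
  | .var x, e => e x
  | .mu x φ, e => sInf {S : Set M.W | M.interp φ (Function.update e x S) ⊆ S}
  | .nu x φ, e => sSup {S : Set M.W | S ⊆ M.interp φ (Function.update e x S)}

/-- `M ⊨ φ`: the root of `M` satisfies `φ`. -/
def Sat (M : Model) (φ : Form) : Prop := M.root ∈ M.interp φ fun _ => ∅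

/-- Points reachable from the root in exactly `k` steps (in a tree: points of depth `k`). -/
def stepsTo (M : Model) : ℕ → M.W → Prop
  | 0, w => w = M.root
  | (k+1), w => ∃ v, M.stepsTo k v ∧ M.R v w

/-- Membership in the `n`-prefix: depth at most `n`. -/
def InPrefix (M : Model) (n : ℕ) (w : M.W) : Prop := ∃ k ≤ n, M.stepsTo k w

/-- Tree models: every point is reachable from the root, the root has no predecessor,
and every point has at most one predecessor. -/
def IsTree (M : Model) : Prop :=
  (∀ w, Relation.ReflTransGen M.R M.root w) ∧
  (∀ w, ¬ M.R w M.root) ∧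
  (∀ w v v', M.R v w → M.R v' w → v = v')

/-- Outdegree at most `d`. -/
def outdegLE (M : Model) (d : ℕ) : Prop :=
  ∀ w, ¬ AtLeastCard (d+1) {v | M.R w v}

end Model

/-- The class `T^d` of all tree models of outdegree at most `d`. -/
def TreeC (d : ℕ) : Set Model := {M | M.IsTree ∧ M.outdegLE d}

/-- `(σ,n)`-bisimulations: bisimulations between the `n`-prefixes of the `σ`-reducts,
relating only points of equal depth and linking the roots. -/
structure IsNBisim (M M' : Model) (σ : Set ℕ) (n : ℕ) (Z : M.W → M'.W → Prop) : Prop where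
  root : Z M.root M'.root
  depthEq : ∀ ⦃w w'⦄, Z w w' → ∃ k ≤ n, M.stepsTo k w ∧ M'.stepsTo k w'
  base : ∀ ⦃w w'⦄, Z w w' → ∀ p ∈ σ, (M.val w p ↔ M'.val w' p)
  forth : ∀ ⦃w w'⦄, Z w w' → ∀ k, k < n → M.stepsTo k w →
      ∀ v, M.R w v → ∃ v', M'.R w' v' ∧ Z v v'
  back : ∀ ⦃w w'⦄, Z w w' → ∀ k, k < n → M'.stepsTo k w' →
      ∀ v', M'.R w' v' → ∃ v, M.R w v ∧ Z v v'

/-- `(σ,n)`-isomorphisms: `(σ,n)`-bisimulations bijective on the `n`-prefixes. -/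
def IsNIso (M M' : Model) (σ : Set ℕ) (n : ℕ) (Z : M.W → M'.W → Prop) : Prop :=
  IsNBisim M M' σ n Z ∧
  (∀ w w₁' w₂', Z w w₁' → Z w w₂' → w₁' = w₂') ∧
  (∀ w₁ w₂ w', Z w₁ w' → Z w₂ w' → w₁ = w₂) ∧
  (∀ w, M.InPrefix n w → ∃ w', Z w w') ∧
  (∀ w', M'.InPrefix n w' → ∃ w, Z w w')

/-- `M ≈ⁿ_σ M'`. -/
def NBisimEq (M M' : Model) (σ : Set ℕ) (n : ℕ) : Prop := ∃ Z, IsNBisim M M' σ n Z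

/-- `M ≅ⁿ_σ M'`. -/
def NIsoEq (M M' : Model) (σ : Set ℕ) (n : ℕ) : Prop := ∃ Z, IsNIso M M' σ n Z

/-- `ψ` separates `φ` from `φ'` over the class `C`: `φ ⊨ ψ` and `ψ ⊨ ¬φ'` over `C`. -/
def Separates (C : Set Model) (ψ φ φ' : Form) : Prop :=
  (∀ M ∈ C, M.Sat φ → M.Sat ψ) ∧ (∀ M ∈ C, M.Sat ψ → ¬ M.Sat φ')

/-- Nondeterministic parity tree automata (NPTA) with alphabet `2^σ`. -/
structure NPTA (σ : Set ℕ) : Type 1 where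
  Q : Type
  fin : Fintype Q
  qI : Q
  δ : Q → Set ℕ → Set (List Q)
  rank : Q → ℕ

/-- The number of states of an automaton. -/
def NPTA.card {σ : Set ℕ} (A : NPTA σ) : ℕ := @Fintype.card A.Q A.fin

/-- A run of `A` on `M`: the root gets the initial state, and at every point the
tuple of states of the children is a legal transition for the point's `σ`-letter. -/
def IsRun {σ : Set ℕ} (A : NPTA σ) (M : Model) (ρ : M.W → A.Q) : Prop :=
  ρ M.root = A.qI ∧
  ∀ w : M.W, ∃ l : List M.W, l.Nodup ∧ (∀ v, v ∈ l ↔ M.R w v) ∧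
    l.map ρ ∈ A.δ (ρ w) (σ ∩ {p | M.val w p})

/-- The parity condition: the largest priority occurring infinitely often is even. -/
def ParityGood (r : ℕ → ℕ) : Prop :=
  ∃ m, Even m ∧ (∀ N, ∃ i, N ≤ i ∧ r i = m) ∧ (∀ k, m < k → ∃ N, ∀ i, N ≤ i → r i ≠ k)

/-- Accepting runs: every infinite path satisfies the parity condition. -/
def IsAccRun {σ : Set ℕ} (A : NPTA σ) (M : Model) (ρ : M.W → A.Q) : Prop :=
  IsRun A M ρ ∧
  ∀ π : ℕ → M.W, (∀ i, M.R (π i) (π (i+1))) → ParityGood fun i => A.rank (ρ (π i))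

/-- `M ⊨ A`: `A` has an accepting run on `M`. -/
def SatA {σ : Set ℕ} (M : Model) (A : NPTA σ) : Prop := ∃ ρ, IsAccRun A M ρ

/-- Joint `≅ⁿ_σ`-consistency of two automata over `T^d`. -/
def JointConA {σ : Set ℕ} (d : ℕ) (A A' : NPTA σ) (n : ℕ) : Prop :=
  ∃ M ∈ TreeC d, ∃ M' ∈ TreeC d, SatA M A ∧ SatA M' A' ∧ NIsoEq M M' σ n

namespace Model

theorem stepsTo_of_reflTransGen (M : Model) {k : ℕ} {v w : M.W} (hv : M.stepsTo k v)
    (h : Relation.ReflTransGen M.R v w) : ∃ j, k ≤ j ∧ M.stepsTo j w := by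
  induction h with
  | refl => exact ⟨k, le_rfl, hv⟩
  | tail _ hr ih =>
    obtain ⟨j, hj, hs⟩ := ih
    exact ⟨j + 1, by omega, _, hs, hr⟩

theorem IsTree.exists_stepsTo {M : Model} (hM : M.IsTree) (w : M.W) : ∃ k, M.stepsTo k w := by
  obtain ⟨j, -, hj⟩ := M.stepsTo_of_reflTransGen (k := 0) rfl (hM.1 w)
  exact ⟨j, hj⟩

theorem IsTree.stepsTo_unique {M : Model} (hM : M.IsTree) {j k : ℕ} {w : M.W}
    (hj : M.stepsTo j w) (hk : M.stepsTo k w) : j = k := by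
  induction j generalizing k w with
  | zero =>
    cases k with
    | zero => rfl
    | succ k =>
      obtain ⟨v, -, hv⟩ := hk
      cases (show w = M.root from hj)
      exact absurd hv (hM.2.1 v)
  | succ j ih =>
    obtain ⟨v, hv, hvw⟩ := hj
    cases k with
    | zero =>
      cases (show w = M.root from hk)
      exact absurd hvw (hM.2.1 v)
    | succ k =>
      obtain ⟨u, hu, huw⟩ := hk
      cases hM.2.2 _ _ _ hvw huw
      rw [ih hv hu]

/-- The submodel generated by a point. -/
abbrev sub (M : Model) (v : M.W) : Model where
  W := {w // Relation.ReflTransGen M.R v w}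
  root := ⟨v, .refl⟩
  R a b := M.R a.1 b.1
  val a := M.val a.1

theorem stepsTo_of_sub {M : Model} {v : M.W} {i k : ℕ} (hv : M.stepsTo i v) {a : (M.sub v).W}
    (ha : (M.sub v).stepsTo k a) : M.stepsTo (i + k) a.1 := by
  induction k generalizing a with
  | zero => cases (show a = (M.sub v).root from ha); exact hv
  | succ k ih =>
    obtain ⟨b, hb, hba⟩ := ha
    exact ⟨b.1, ih hb, hba⟩

theorem sub_reflTransGen {M : Model} {v : M.W} (a : (M.sub v).W) :
    Relation.ReflTransGen (M.sub v).R (M.sub v).root a := by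
  obtain ⟨w, hw⟩ := a
  induction hw with
  | refl => exact .refl
  | tail h hr ih => exact ih.tail hr

theorem IsTree.sub {M : Model} (hM : M.IsTree) (v : M.W) : (M.sub v).IsTree := by
  refine ⟨sub_reflTransGen, fun a ha => ?_, fun a b c hb hc => Subtype.ext (hM.2.2 _ _ _ hb hc)⟩
  obtain ⟨k, hk⟩ := hM.exists_stepsTo v
  obtain ⟨j, hj, hs⟩ := M.stepsTo_of_reflTransGen hk a.2
  have := hM.stepsTo_unique hk (show M.stepsTo (j + 1) v from ⟨_, hs, ha⟩)
  omega

theorem IsTree.sub_stepsTo_of {M : Model} (hM : M.IsTree) {v : M.W} {i k : ℕ}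
    (hv : M.stepsTo i v) {a : (M.sub v).W} (ha : M.stepsTo (i + k) a.1) :
    (M.sub v).stepsTo k a := by
  obtain ⟨j, hj⟩ := (hM.sub v).exists_stepsTo a
  have := hM.stepsTo_unique ha (stepsTo_of_sub hv hj)
  obtain rfl : k = j := by omega
  exact hj

/-- The accessibility relation of `glue`. -/
inductive GlueR {ι : Type} (M : ι → Model) :
    Option (Σ i, (M i).W) → Option (Σ i, (M i).W) → Prop
  | root (i : ι) : GlueR M none (some ⟨i, (M i).root⟩)
  | step (i : ι) {w v : (M i).W} (h : (M i).R w v) : GlueR M (some ⟨i, w⟩) (some ⟨i, v⟩)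

/-- The model with a fresh root labelled `c` whose immediate submodels are the `M i`. -/
abbrev glue {ι : Type} (c : Set ℕ) (M : ι → Model) : Model where
  W := Option (Σ i, (M i).W)
  root := none
  R := GlueR M
  val
    | none => fun p => p ∈ c
    | some a => (M a.1).val a.2

theorem glue_stepsTo_some {ι : Type} {c : Set ℕ} {M : ι → Model} {i : ι} {w : (M i).W} {k : ℕ} :
    (glue c M).stepsTo k (some ⟨i, w⟩) ↔ ∃ j, k = j + 1 ∧ (M i).stepsTo j w := by
  induction k generalizing w with
  | zero =>
    constructor
    · intro h
      exact absurd h (Option.some_ne_none _)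
    · rintro ⟨j, hj, -⟩
      omega
  | succ k ih =>
    constructor
    · rintro ⟨v, hv, hvw⟩
      cases hvw with
      | root =>
        cases k with
        | zero => exact ⟨0, rfl, rfl⟩
        | succ k =>
          obtain ⟨u, -, hu⟩ := hv
          cases hu
      | step _ h =>
        obtain ⟨j, rfl, hj⟩ := ih.1 hv
        exact ⟨j + 1, rfl, _, hj, h⟩
    · rintro ⟨j, hj, hs⟩
      obtain rfl : k = j := by omega
      cases k with
      | zero =>
        cases (show w = (M i).root from hs)
        exact ⟨none, rfl, .root i⟩
      | succ k =>
        obtain ⟨u, hu, huw⟩ := hs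
        exact ⟨some ⟨i, u⟩, ih.2 ⟨k, rfl, hu⟩, .step i huw⟩

theorem isTree_glue {ι : Type} (c : Set ℕ) {M : ι → Model} (hM : ∀ i, (M i).IsTree) :
    (glue c M).IsTree := by
  refine ⟨fun w => ?_, fun w h => ?_, fun w v v' h h' => ?_⟩
  · rcases w with _ | ⟨i, w⟩
    · exact .refl
    · induction (hM i).1 w with
      | refl => exact .single (.root i)
      | tail _ hr ih => exact ih.tail (.step i hr)
  · generalize hr : (glue c M).root = r at h
    cases h <;> cases hr
  · cases h with
    | root i =>
      generalize hr : (M i).root = r at h'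
      cases h' with
      | root => rfl
      | step _ h => subst hr; exact absurd h ((hM i).2.1 _)
    | step i h =>
      rename_i a b
      generalize hr : b = r at h'
      cases h' with
      | root => subst hr; exact absurd h ((hM i).2.1 _)
      | step _ h' => subst hr; rw [(hM i).2.2 _ _ _ h h']

end Model

theorem ParityGood.of_succ {r : ℕ → ℕ} (h : ParityGood fun i => r (i + 1)) : ParityGood r := by
  obtain ⟨m, hm, hi, hf⟩ := h
  refine ⟨m, hm, fun N => ?_, fun k hk => ?_⟩
  · obtain ⟨i, hNi, h⟩ := hi N
    exact ⟨i + 1, by omega, h⟩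
  · obtain ⟨N, hN⟩ := hf k hk
    refine ⟨N + 1, fun i hNi => ?_⟩
    obtain ⟨j, rfl⟩ : ∃ j, i = j + 1 := ⟨i - 1, by omega⟩
    exact hN j (by omega)

/-- The automaton `A` started in the state `q`. -/
abbrev NPTA.withInit {σ : Set ℕ} (A : NPTA σ) (q : A.Q) : NPTA σ := { A with qI := q }

theorem IsRun.outdegLE {σ : Set ℕ} {d : ℕ} {A : NPTA σ} {M : Model} {ρ : M.W → A.Q}
    (h : IsRun A M ρ) (hA : ∀ q c l, l ∈ A.δ q c → l.length ≤ d) : M.outdegLE d := by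
  rintro w ⟨f, hf, hfR⟩
  obtain ⟨l, -, hl, hδ⟩ := h.2 w
  have hlen := hA _ _ _ hδ
  rw [List.length_map] at hlen
  have hsub : (List.ofFn f) ⊆ l := by
    intro x hx
    obtain ⟨i, rfl⟩ := (List.mem_ofFn' f x).1 hx
    exact (hl _).2 (hfR i)
  have := ((List.nodup_ofFn.2 hf).subperm hsub).length_le
  rw [List.length_ofFn] at this
  omega

theorem IsAccRun.sub {σ : Set ℕ} {A : NPTA σ} {M : Model} {ρ : M.W → A.Q} (h : IsAccRun A M ρ)
    (v : M.W) : IsAccRun (A.withInit (ρ v)) (M.sub v) (fun a => ρ a.1) := by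
  refine ⟨⟨rfl, fun a => ?_⟩, fun π hπ => h.2 (fun i => (π i).1) hπ⟩
  obtain ⟨l, hnd, hl, hδ⟩ := h.1.2 a.1
  refine ⟨l.attachWith _ fun x hx => a.2.tail ((hl x).1 hx), ?_, fun b => ?_, ?_⟩
  · refine List.Nodup.of_map Subtype.val ?_
    rwa [List.attachWith_map_subtype_val]
  · rw [List.mem_attachWith]
    exact hl b.1
  · have : (l.attachWith (fun x => Relation.ReflTransGen M.R v x)
        fun x hx => a.2.tail ((hl x).1 hx)).map (fun b => ρ b.1) = l.map ρ := by
      rw [List.attachWith_map_val]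
    exact this ▸ hδ

theorem isAccRun_glue {σ : Set ℕ} {A : NPTA σ} {ι : Type} {c : Set ℕ} {M : ι → Model} {q : A.Q}
    {s : ι → A.Q} {l : List ι} (hnd : l.Nodup) (hl : ∀ i, i ∈ l) (hδ : l.map s ∈ A.δ q (σ ∩ c))
    {ρ : ∀ i, (M i).W → A.Q} (h : ∀ i, IsAccRun (A.withInit (s i)) (M i) (ρ i)) :
    IsAccRun (A.withInit q) (Model.glue c M) (fun w => w.elim q fun a => ρ a.1 a.2) := by
  refine ⟨⟨rfl, ?_⟩, fun π hπ => ?_⟩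
  · rintro (_ | ⟨i, w⟩)
    · refine ⟨l.map fun i => some ⟨i, (M i).root⟩, ?_, fun v => ?_, ?_⟩
      · refine hnd.map fun i j hij => ?_
        cases hij
        rfl
      · rw [List.mem_map]
        constructor
        · rintro ⟨i, -, rfl⟩
          exact .root i
        · rintro ⟨i⟩
          exact ⟨i, hl i, rfl⟩
      · rw [List.map_map]
        rw [← show (fun i => ρ i (M i).root) = s from funext fun i => (h i).1.1] at hδ
        exact hδ
    · obtain ⟨l, hnd, hl, hδ⟩ := (h i).1.2 w
      refine ⟨l.map fun v => some ⟨i, v⟩, ?_, fun v => ?_, ?_⟩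
      · refine hnd.map fun u v huv => ?_
        cases huv
        rfl
      · rw [List.mem_map]
        constructor
        · rintro ⟨v, hv, rfl⟩
          exact .step i ((hl v).1 hv)
        · intro hv
          cases hv with
          | step _ hv => exact ⟨_, (hl _).2 hv, rfl⟩
      · rw [List.map_map]
        exact hδ
  · refine ParityGood.of_succ ?_
    obtain ⟨i, w, hw⟩ : ∃ i w, π 1 = some ⟨i, w⟩ := by
      have := hπ 0
      generalize π 0 = x, π (0 + 1) = y at this
      cases this <;> exact ⟨_, _, rfl⟩
    have hall : ∀ k, ∃ w, π (k + 1) = some ⟨i, w⟩ := by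
      intro k
      induction k with
      | zero => exact ⟨w, hw⟩
      | succ k ih =>
        obtain ⟨v, hv⟩ := ih
        have := hπ (k + 1)
        rw [hv] at this
        generalize π (k + 1 + 1) = y at this
        cases this
        exact ⟨_, rfl⟩
    choose τ hτ using hall
    have hpath : ∀ k, (M i).R (τ k) (τ (k + 1)) := by
      intro k
      have := hπ (k + 1)
      rw [hτ, hτ] at this
      generalize τ k = x, τ (k + 1) = y at this
      cases this
      assumption
    have := (h i).2 τ hpath
    simp only [hτ]
    exact this

theorem IsNBisim.symm {M M' : Model} {σ : Set ℕ} {n : ℕ} {Z : M.W → M'.W → Prop}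
    (h : IsNBisim M M' σ n Z) : IsNBisim M' M σ n (fun w' w => Z w w') where
  root := h.root
  depthEq _ _ hz := by
    obtain ⟨k, hk, h₁, h₂⟩ := h.depthEq hz
    exact ⟨k, hk, h₂, h₁⟩
  base _ _ hz p hp := (h.base hz p hp).symm
  forth _ _ hz := h.back hz
  back _ _ hz := h.forth hz

theorem IsNBisim.total {M M' : Model} {σ : Set ℕ} {n : ℕ} {Z : M.W → M'.W → Prop}
    (h : IsNBisim M M' σ n Z) {w : M.W} (hw : M.InPrefix n w) : ∃ w', Z w w' := by
  obtain ⟨k, hk, hs⟩ := hw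
  induction k generalizing w with
  | zero => cases (show w = M.root from hs); exact ⟨_, h.root⟩
  | succ k ih =>
    obtain ⟨v, hv, hvw⟩ := hs
    obtain ⟨v', hz⟩ := ih (by omega) hv
    obtain ⟨w', -, hw'⟩ := h.forth hz k (by omega) hv w hvw
    exact ⟨w', hw'⟩

theorem IsNBisim.isNIso {M M' : Model} {σ : Set ℕ} {n : ℕ} {Z : M.W → M'.W → Prop}
    (h : IsNBisim M M' σ n Z) (hf : ∀ w w₁' w₂', Z w w₁' → Z w w₂' → w₁' = w₂')
    (hi : ∀ w₁ w₂ w', Z w₁ w' → Z w₂ w' → w₁ = w₂) : IsNIso M M' σ n Z :=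
  ⟨h, hf, hi, fun _ => h.total, fun _ => h.symm.total⟩

theorem NIsoEq.of_succ {M M' : Model} (hM : M.IsTree) (hM' : M'.IsTree) {σ : Set ℕ} {n : ℕ}
    (h : NIsoEq M M' σ (n + 1)) : NIsoEq M M' σ n := by
  obtain ⟨Z, hZ, hf, hi, -, -⟩ := h
  refine ⟨fun w w' => Z w w' ∧ ∃ k ≤ n, M.stepsTo k w ∧ M'.stepsTo k w', IsNBisim.isNIso
    ⟨⟨hZ.root, 0, Nat.zero_le _, rfl, rfl⟩, fun _ _ h => h.2, fun _ _ h => hZ.base h.1, ?_, ?_⟩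
    (fun _ _ _ h₁ h₂ => hf _ _ _ h₁.1 h₂.1) (fun _ _ _ h₁ h₂ => hi _ _ _ h₁.1 h₂.1)⟩
  · rintro w w' ⟨hz, j, -, hj, hj'⟩ k hk hs v hv
    cases hM.stepsTo_unique hj hs
    obtain ⟨v', hv', hz'⟩ := hZ.forth hz j (by omega) hs v hv
    exact ⟨v', hv', hz', j + 1, hk, ⟨w, hj, hv⟩, ⟨w', hj', hv'⟩⟩
  · rintro w w' ⟨hz, j, -, hj, hj'⟩ k hk hs v' hv'
    cases hM'.stepsTo_unique hj' hs
    obtain ⟨v, hv, hz'⟩ := hZ.back hz j (by omega) hs v' hv'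
    exact ⟨v, hv, hz', j + 1, hk, ⟨w, hj, hv⟩, ⟨w', hj', hv'⟩⟩

theorem IsNIso.sub {M M' : Model} (hM : M.IsTree) (hM' : M'.IsTree) {σ : Set ℕ} {n : ℕ}
    {Z : M.W → M'.W → Prop} (h : IsNIso M M' σ (n + 1) Z) {v : M.W} {v' : M'.W}
    (hv : M.R M.root v) (hv' : M'.R M'.root v') (hz : Z v v') :
    NIsoEq (M.sub v) (M'.sub v') σ n := by
  obtain ⟨hZ, hf, hi, -, -⟩ := h
  have hs : M.stepsTo 1 v := ⟨_, rfl, hv⟩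
  have hs' : M'.stepsTo 1 v' := ⟨_, rfl, hv'⟩
  refine ⟨fun a b => Z a.1 b.1, IsNBisim.isNIso
    ⟨hz, fun a b hab => ?_, fun _ _ h => hZ.base h, ?_, ?_⟩
    (fun _ _ _ h₁ h₂ => Subtype.ext (hf _ _ _ h₁ h₂))
    (fun _ _ _ h₁ h₂ => Subtype.ext (hi _ _ _ h₁ h₂))⟩
  · obtain ⟨k, hk, hka, hkb⟩ := hZ.depthEq hab
    obtain ⟨j, hj⟩ := (hM.sub v).exists_stepsTo a
    cases hM.stepsTo_unique hka (Model.stepsTo_of_sub hs hj)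
    exact ⟨j, by omega, hj, hM'.sub_stepsTo_of hs' hkb⟩
  · intro a b hab k hk hka x hx
    obtain ⟨y, hy, hxy⟩ := hZ.forth hab (1 + k) (by omega) (Model.stepsTo_of_sub hs hka) x.1 hx
    exact ⟨⟨y, b.2.tail hy⟩, hy, hxy⟩
  · intro a b hab k hk hkb y hy
    obtain ⟨x, hx, hxy⟩ := hZ.back hab (1 + k) (by omega) (Model.stepsTo_of_sub hs' hkb) y.1 hy
    exact ⟨⟨x, a.2.tail hx⟩, hx, hxy⟩

/-- The relation between glued models induced by relations between their components. -/
inductive GlueRel {ι : Type} {M M' : ι → Model} (Z : ∀ i, (M i).W → (M' i).W → Prop) :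
    Option (Σ i, (M i).W) → Option (Σ i, (M' i).W) → Prop
  | root : GlueRel Z none none
  | some (i : ι) {w : (M i).W} {w' : (M' i).W} (h : Z i w w') :
      GlueRel Z (some ⟨i, w⟩) (some ⟨i, w'⟩)

theorem nIsoEq_glue {ι : Type} {M M' : ι → Model} {σ : Set ℕ} {n : ℕ} (c : Set ℕ)
    (h : ∀ i, NIsoEq (M i) (M' i) σ n) : NIsoEq (Model.glue c M) (Model.glue c M') σ (n + 1) := by
  choose Z hZ using h
  refine ⟨GlueRel Z, IsNBisim.isNIso ⟨.root, ?_, ?_, ?_, ?_⟩ ?_ ?_⟩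
  · rintro _ _ (_ | ⟨i, h⟩)
    · exact ⟨0, Nat.zero_le _, rfl, rfl⟩
    · obtain ⟨k, hk, hs, hs'⟩ := (hZ i).1.depthEq h
      exact ⟨k + 1, by omega, Model.glue_stepsTo_some.2 ⟨k, rfl, hs⟩,
        Model.glue_stepsTo_some.2 ⟨k, rfl, hs'⟩⟩
  · rintro _ _ (_ | ⟨i, h⟩)
    · exact fun p _ => Iff.rfl
    · exact (hZ i).1.base h
  · rintro _ _ (_ | ⟨i, h⟩) k hk hs v hv
    · obtain ⟨i⟩ := hv
      exact ⟨_, .root i, .some i (hZ i).1.root⟩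
    · obtain ⟨j, rfl, hj⟩ := Model.glue_stepsTo_some.1 hs
      cases hv with
      | step _ hv =>
        obtain ⟨v', hv', hz⟩ := (hZ i).1.forth h j (by omega) hj _ hv
        exact ⟨_, .step i hv', .some i hz⟩
  · rintro _ _ (_ | ⟨i, h⟩) k hk hs v hv
    · obtain ⟨i⟩ := hv
      exact ⟨_, .root i, .some i (hZ i).1.root⟩
    · obtain ⟨j, rfl, hj⟩ := Model.glue_stepsTo_some.1 hs
      cases hv with
      | step _ hv =>
        obtain ⟨v', hv', hz⟩ := (hZ i).1.back h j (by omega) hj _ hv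
        exact ⟨_, .step i hv', .some i hz⟩
  · rintro _ _ _ (_ | ⟨i, h⟩) h'
    · cases h'
      rfl
    · cases h' with
      | some _ h' => rw [(hZ i).2.1 _ _ _ h h']
  · rintro _ _ _ (_ | ⟨i, h⟩) h'
    · cases h'
      rfl
    · cases h' with
      | some _ h' => rw [(hZ i).2.2.1 _ _ _ h h']

/-- One step of the joint consistency computation: the states `q` and `q'` admit transitions on a
common letter whose entries can be matched bijectively by pairs in `S`. -/
def JointStep {σ : Set ℕ} (A A' : NPTA σ) (S : Set (A.Q × A'.Q)) : Set (A.Q × A'.Q) :=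
  {p | ∃ (c : Set ℕ) (ι : Type) (s : ι → A.Q) (s' : ι → A'.Q) (l l' : List ι),
    l.Nodup ∧ l'.Nodup ∧ (∀ i, i ∈ l) ∧ (∀ i, i ∈ l') ∧
    l.map s ∈ A.δ p.1 (σ ∩ c) ∧ l'.map s' ∈ A'.δ p.2 (σ ∩ c) ∧ ∀ i, (s i, s' i) ∈ S}

/-- The pairs of states from which `A` and `A'` are joint `≅ⁿ_σ`-consistent over `T^d`. -/
def jointPairs {σ : Set ℕ} (d : ℕ) (A A' : NPTA σ) (n : ℕ) : Set (A.Q × A'.Q) :=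
  {p | JointConA d (A.withInit p.1) (A'.withInit p.2) n}

theorem jointPairs_succ_subset {σ : Set ℕ} (d : ℕ) (A A' : NPTA σ) (n : ℕ) :
    jointPairs d A A' (n + 1) ⊆ jointPairs d A A' n := by
  rintro p ⟨M, hM, M', hM', hA, hA', h⟩
  exact ⟨M, hM, M', hM', hA, hA', h.of_succ hM.1 hM'.1⟩

theorem jointStep_subset_jointPairs {σ : Set ℕ} {d : ℕ} {A A' : NPTA σ}
    (hA : ∀ q c l, l ∈ A.δ q c → l.length ≤ d)
    (hA' : ∀ q c l, l ∈ A'.δ q c → l.length ≤ d) (n : ℕ) :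
    JointStep A A' (jointPairs d A A' n) ⊆ jointPairs d A A' (n + 1) := by
  rintro ⟨q, q'⟩ ⟨c, ι, s, s', l, l', hnd, hnd', hl, hl', hδ, hδ', h⟩
  choose M hM M' hM' hS hS' hiso using h
  choose ρ hρ using hS
  choose ρ' hρ' using hS'
  have hrun := isAccRun_glue (c := c) hnd hl hδ hρ
  have hrun' := isAccRun_glue (c := c) hnd' hl' hδ' hρ'
  exact ⟨_, ⟨Model.isTree_glue c fun i => (hM i).1, hrun.1.outdegLE hA⟩,
    _, ⟨Model.isTree_glue c fun i => (hM' i).1, hrun'.1.outdegLE hA'⟩,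
    ⟨_, hrun⟩, ⟨_, hrun'⟩, nIsoEq_glue c hiso⟩

theorem jointPairs_succ_subset_jointStep {σ : Set ℕ} {d : ℕ} {A A' : NPTA σ}
    (hA : ∀ q c l, l ∈ A.δ q c → l.length ≤ d)
    (hA' : ∀ q c l, l ∈ A'.δ q c → l.length ≤ d) (n : ℕ) :
    jointPairs d A A' (n + 1) ⊆ JointStep A A' (jointPairs d A A' n) := by
  rintro ⟨q, q'⟩ ⟨M, hM, M', hM', ⟨ρ, hρ⟩, ⟨ρ', hρ'⟩, Z, hZ⟩
  obtain ⟨l, hnd, hl, hδ⟩ := hρ.1.2 M.root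
  obtain ⟨l', hnd', hl', hδ'⟩ := hρ'.1.2 M'.root
  have hforth : ∀ v : {v // M.R M.root v}, ∃ v' : {v' // M'.R M'.root v'}, Z v.1 v'.1 := by
    rintro ⟨v, hv⟩
    obtain ⟨v', hv', hz⟩ := hZ.1.forth hZ.1.root 0 (Nat.succ_pos n) rfl v hv
    exact ⟨⟨v', hv'⟩, hz⟩
  have hback : ∀ v' : {v' // M'.R M'.root v'}, ∃ v : {v // M.R M.root v}, Z v.1 v'.1 := by
    rintro ⟨v', hv'⟩
    obtain ⟨v, hv, hz⟩ := hZ.1.back hZ.1.root 0 (Nat.succ_pos n) rfl v' hv'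
    exact ⟨⟨v, hv⟩, hz⟩
  choose f hf using hforth
  choose g hg using hback
  have hfg : ∀ v', f (g v') = v' := fun v' => Subtype.ext (hZ.2.1 _ _ _ (hf _) (hg v'))
  have hgf : ∀ v, g (f v) = v := fun v => Subtype.ext (hZ.2.2.1 _ _ _ (hg _) (hf v))
  refine ⟨{p | M.val M.root p}, {v // M.R M.root v}, fun v => ρ v.1, fun v => ρ' (f v).1,
    l.attachWith _ fun x => (hl x).1, (l'.attachWith _ fun x => (hl' x).1).map g,
    ?_, ?_, fun v => ?_, fun v => ?_, ?_, ?_, fun v => ?_⟩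
  · refine List.Nodup.of_map Subtype.val ?_
    rwa [List.attachWith_map_subtype_val]
  · refine List.Nodup.map (Function.LeftInverse.injective hfg) ?_
    refine List.Nodup.of_map Subtype.val ?_
    rwa [List.attachWith_map_subtype_val]
  · rw [List.mem_attachWith]
    exact (hl v.1).2 v.2
  · rw [List.mem_map]
    refine ⟨f v, ?_, hgf v⟩
    rw [List.mem_attachWith]
    exact (hl' _).2 (f v).2
  · rw [List.attachWith_map_val, ← show ρ M.root = q from hρ.1.1]
    exact hδ
  · have hc : σ ∩ {p | M.val M.root p} = σ ∩ {p | M'.val M'.root p} := by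
      ext p
      exact and_congr_right fun hp => hZ.1.base hZ.1.root p hp
    rw [hc, List.map_map, ← show ρ' M'.root = q' from hρ'.1.1]
    simp only [Function.comp_def, hfg]
    rw [List.attachWith_map_val]
    exact hδ'
  · have hrun := hρ.sub v.1
    have hrun' := hρ'.sub (f v).1
    exact ⟨_, ⟨hM.1.sub _, hrun.1.outdegLE hA⟩, _, ⟨hM'.1.sub _, hrun'.1.outdegLE hA'⟩,
      ⟨_, hrun⟩, ⟨_, hrun'⟩, hZ.sub hM.1 hM'.1 v.2 (f v).2 (hf v)⟩

/-- A decreasing sequence of subsets of a finite type that is generated by iterating an operator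
is constant from the cardinality of the type on. -/
theorem Set.iterate_stable_of_card_le {α : Type*} [Fintype α] (F : Set α → Set α)
    (S : ℕ → Set α) (hF : ∀ n, S (n + 1) = F (S n)) (hS : ∀ n, S (n + 1) ⊆ S n) {n : ℕ}
    (hn : Fintype.card α ≤ n) : S n = S (Fintype.card α) := by
  have hstable : ∀ i, S (i + 1) = S i → ∀ j, i ≤ j → S j = S i := by
    intro i hi j hj
    induction j, hj using Nat.le_induction with
    | base => rfl
    | succ j _ ih => rw [hF, ih, ← hF, hi]
  have hcount : ∀ k, (∃ i < k, S (i + 1) = S i) ∨ (S k).ncard + k ≤ Fintype.card α := by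
    intro k
    induction k with
    | zero =>
      right
      rw [← Nat.card_eq_fintype_card, ← Set.ncard_univ]
      exact Set.ncard_le_ncard (Set.subset_univ _)
    | succ k ih =>
      rcases ih with ⟨i, hi, h⟩ | h
      · exact .inl ⟨i, by omega, h⟩
      · by_cases hk : S (k + 1) = S k
        · exact .inl ⟨k, by omega, hk⟩
        · have := Set.ncard_lt_ncard ((hS k).ssubset_of_ne hk)
          right
          omega
  obtain ⟨i, hi, h⟩ := (hcount (Fintype.card α + 1)).resolve_right (by omega)
  exact (hstable i h n (by omega)).trans (hstable i h _ (by omega)).symm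

/-- joint `≅ⁿ_σ`-consistency over `T^d` for all `n` is equivalent to joint
`≅ᵐ_σ`-consistency for `m = |A| ⬝ |A'| + 1`. -/
theorem stmt_4 (σ : Set ℕ) (hσ : σ.Finite) (d : ℕ) (A A' : NPTA σ)
    (hA : ∀ q c l, l ∈ A.δ q c → l.length ≤ d)
    (hA' : ∀ q c l, l ∈ A'.δ q c → l.length ≤ d) :
    (∀ n : ℕ, JointConA d A A' n) ↔ JointConA d A A' (A.card * A'.card + 1) := by
  refine ⟨fun h => h _, fun h n => ?_⟩
  let _ := A.fin
  let _ := A'.fin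
  have hF : ∀ n, jointPairs d A A' (n + 1) = JointStep A A' (jointPairs d A A' n) := fun n =>
    (jointPairs_succ_subset_jointStep hA hA' n).antisymm (jointStep_subset_jointPairs hA hA' n)
  have hanti : Antitone (jointPairs d A A') :=
    antitone_nat_of_succ_le (jointPairs_succ_subset d A A')
  have hcard : Fintype.card (A.Q × A'.Q) = A.card * A'.card := Fintype.card_prod _ _
  have hstable := fun {n} => Set.iterate_stable_of_card_le (n := n) _ _ hF
    (jointPairs_succ_subset d A A')
  rw [hcard] at hstable
  have hm : (A.qI, A'.qI) ∈ jointPairs d A A' (A.card * A'.card) := hanti (Nat.le_succ _) h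
  rcases le_total (A.card * A'.card) n with hn | hn
  · rw [← hstable hn] at hm
    exact hm
  · exact hanti hn hm
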